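/- arXiv:2204.09512 — 2 statements merged into one kernel-verified Lean document; each statement's English description precedes it below -/
import Mathlib

section
/- Let X be a topological space, Y a T0 space, and f, g : X → Y continuous maps, and let E(f, g) = {x ∈ X : f(x) = g(x)} carry the subspace topology. If X is sober, then E(f, g) is sober; if X is well-filtered, then E(f, g) is well-filtered; if X is a d-space, then E(f, g) is a d-space. -/
universe u v

open Set

/-- The specialization order on a topological space: `specLE x y` iff `x ∈ closure {y}`. -/
def specLE {X : Type*} [TopologicalSpace X] (x y : X) : Prop :=
  x ∈ closure ({y} : Set X)

/-- `a` is an upper bound of `D` with respect to the specialization order. -/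
def specUB {X : Type*} [TopologicalSpace X] (D : Set X) (a : X) : Prop :=
  ∀ d ∈ D, specLE d a

/-- `a` is a least upper bound of `D` with respect to the specialization order. -/
def specLUB {X : Type*} [TopologicalSpace X] (D : Set X) (a : X) : Prop :=
  specUB D a ∧ ∀ b, specUB D b → specLE a b

/-- `U` is Scott open with respect to the specialization order. -/
def ScottOpenSpec {X : Type*} [TopologicalSpace X] (U : Set X) : Prop :=
  (∀ x y, specLE x y → x ∈ U → y ∈ U) ∧
  ∀ D : Set X, D.Nonempty → DirectedOn specLE D → ∀ a, specLUB D a → a ∈ U →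
    (D ∩ U).Nonempty

/-- A d-space (monotone convergence space): a T0 space which is a dcpo in its
specialization order and in which every open set is Scott open with respect to
the specialization order. -/
def DSpace (X : Type*) [TopologicalSpace X] : Prop :=
  T0Space X ∧
  (∀ D : Set X, D.Nonempty → DirectedOn specLE D → ∃ a, specLUB D a) ∧
  (∀ U : Set X, IsOpen U → ScottOpenSpec U)

/-- A set is saturated if it is an intersection of open sets. -/
def Saturated {X : Type*} [TopologicalSpace X] (A : Set X) : Prop :=
  ∃ 𝒰 : Set (Set X), (∀ U ∈ 𝒰, IsOpen U) ∧ A = ⋂₀ 𝒰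

/-- A T0 space is well-filtered if every filtered (under reverse inclusion) family of
nonempty compact saturated sets whose intersection is contained in an open set `U`
has a member contained in `U`. -/
def WellFiltered (X : Type*) [TopologicalSpace X] : Prop :=
  T0Space X ∧
  ∀ 𝒦 : Set (Set X), 𝒦.Nonempty →
    (∀ K ∈ 𝒦, K.Nonempty ∧ IsCompact K ∧ Saturated K) →
    DirectedOn (fun A B => B ⊆ A) 𝒦 →
    ∀ U : Set X, IsOpen U → ⋂₀ 𝒦 ⊆ U → ∃ K ∈ 𝒦, K ⊆ U

/-- A nonempty closed set which is irreducible. -/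
def IrredClosed {X : Type*} [TopologicalSpace X] (A : Set X) : Prop :=
  A.Nonempty ∧ IsClosed A ∧
  ∀ F₁ F₂ : Set X, IsClosed F₁ → IsClosed F₂ → A ⊆ F₁ ∪ F₂ → (A ⊆ F₁ ∨ A ⊆ F₂)

/-- A space is sober if every irreducible closed set is the closure of a unique point. -/
def Sober (X : Type*) [TopologicalSpace X] : Prop :=
  ∀ A : Set X, IrredClosed A → ∃! x : X, A = closure ({x} : Set X)

/-- The specialization preorder on a topological space. -/
def specPreorder (Y : Type*) [TopologicalSpace Y] : Preorder Y where
  le := specLE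
  le_refl x := subset_closure rfl
  le_trans x y z hxy hyz :=
    closure_minimal (Set.singleton_subset_iff.mpr hyz) isClosed_closure hxy

/-- A Scott open subset of a poset: an upper set inaccessible by suprema of directed sets. -/
def IsScottOpen {P : Type*} [Preorder P] (U : Set P) : Prop :=
  IsUpperSet U ∧
  ∀ D : Set P, D.Nonempty → DirectedOn (· ≤ ·) D → ∀ a, IsLUB D a → a ∈ U →
    (D ∩ U).Nonempty

/-- The Scott topology on a poset. `Σ P` is `P` equipped with `scottTop P`. -/
def scottTop (P : Type*) [Preorder P] : TopologicalSpace P where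
  IsOpen := IsScottOpen
  isOpen_univ := by
    refine ⟨isUpperSet_univ, fun D hD _ _ _ _ => ?_⟩
    obtain ⟨d, hd⟩ := hD
    exact ⟨d, hd, trivial⟩
  isOpen_inter := by
    rintro U V ⟨hU1, hU2⟩ ⟨hV1, hV2⟩
    refine ⟨hU1.inter hV1, ?_⟩
    rintro D hne hdir a ha ⟨haU, haV⟩
    obtain ⟨d1, hd1D, hd1U⟩ := hU2 D hne hdir a ha haU
    obtain ⟨d2, hd2D, hd2V⟩ := hV2 D hne hdir a ha haV
    obtain ⟨d3, hd3D, h13, h23⟩ := hdir d1 hd1D d2 hd2D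
    exact ⟨d3, hd3D, hU1 h13 hd1U, hV1 h23 hd2V⟩
  isOpen_sUnion := by
    intro S hS
    refine ⟨isUpperSet_sUnion fun s hs => (hS s hs).1, ?_⟩
    rintro D hne hdir a ha ⟨U, hUS, haU⟩
    obtain ⟨d, hdD, hdU⟩ := (hS U hUS).2 D hne hdir a ha haU
    exact ⟨d, hdD, U, hUS, hdU⟩

/-- A dcpo: every nonempty directed subset has a least upper bound. -/
def IsDcpo (P : Type*) [Preorder P] : Prop :=
  ∀ D : Set P, D.Nonempty → DirectedOn (· ≤ ·) D → ∃ a, IsLUB D a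

/-- The way-below relation. -/
def wayBelow {P : Type*} [Preorder P] (x y : P) : Prop :=
  ∀ D : Set P, D.Nonempty → DirectedOn (· ≤ ·) D → ∀ a, IsLUB D a → y ≤ a →
    ∃ d ∈ D, x ≤ d

/-- A poset is Noetherian if every (nonempty) directed subset has a greatest member. -/
def Noetherian (P : Type*) [Preorder P] : Prop :=
  ∀ D : Set P, D.Nonempty → DirectedOn (· ≤ ·) D → ∃ m ∈ D, ∀ d ∈ D, d ≤ m

/-- An ideal: a (nonempty) directed lower set. -/
def IsIdealSet {P : Type*} [Preorder P] (I : Set P) : Prop :=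
  I.Nonempty ∧ DirectedOn (· ≤ ·) I ∧ IsLowerSet I

/-- The Alexandroff topology on a poset: the open sets are the upper sets. -/
def alexTop (P : Type*) [Preorder P] : TopologicalSpace P where
  IsOpen := IsUpperSet
  isOpen_univ := isUpperSet_univ
  isOpen_inter _ _ := IsUpperSet.inter
  isOpen_sUnion _ h := isUpperSet_sUnion h

/-- The space `X_⊤` obtained from `X` by adjoining a new top point `⊤` (here `none`):
the closed sets are the closed sets of `X` together with the whole space. -/
def topTop (X : Type*) [TopologicalSpace X] : TopologicalSpace (Option X) where
  IsOpen V := V = ∅ ∨ ∃ U : Set X, IsOpen U ∧ V = insert none (some '' U)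
  isOpen_univ := by
    refine Or.inr ⟨Set.univ, isOpen_univ, ?_⟩
    ext (_ | a) <;> simp
  isOpen_inter := by
    rintro V W (rfl | ⟨U₁, hU₁, rfl⟩) hW
    · exact Or.inl (by simp)
    rcases hW with rfl | ⟨U₂, hU₂, rfl⟩
    · exact Or.inl (by simp)
    · refine Or.inr ⟨U₁ ∩ U₂, hU₁.inter hU₂, ?_⟩
      ext (_ | a) <;> simp
  isOpen_sUnion := by
    classical
    intro S hS
    by_cases h0 : ⋃₀ S = ∅
    · exact Or.inl h0
    · refine Or.inr ⟨{x : X | some x ∈ ⋃₀ S}, ?_, ?_⟩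
      · have h1 : {x : X | some x ∈ ⋃₀ S} = ⋃ V ∈ S, some ⁻¹' V := by
          ext x; simp [Set.mem_sUnion]
        rw [h1]
        refine isOpen_biUnion fun V hV => ?_
        rcases hS V hV with rfl | ⟨U, hU, rfl⟩
        · rw [Set.preimage_empty]; exact isOpen_empty
        · have h2 : (some ⁻¹' (insert none (some '' U)) : Set X) = U := by
            ext x; simp
          rw [h2]; exact hU
      · have hnone : (none : Option X) ∈ ⋃₀ S := by
          obtain ⟨v, V, hVS, hvV⟩ := Set.nonempty_iff_ne_empty.mpr h0
          rcases hS V hVS with rfl | ⟨U, hU, rfl⟩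
          · exact absurd hvV (by simp)
          · exact ⟨_, hVS, by simp⟩
        ext (_ | a)
        · simp only [Set.mem_insert_iff, true_or, iff_true]
          exact hnone
        · simp [Set.mem_sUnion]

/-- A `𝐊`-set of a space `X` (relative to a class `K` of spaces): a set whose image
under any continuous map to a `𝐊`-space has the closure of a unique point as closure. -/
def IsKSet (K : (Y : Type u) → TopologicalSpace Y → Prop)
    (X : Type u) [tX : TopologicalSpace X] (A : Set X) : Prop :=
  ∀ (Y : Type u) (tY : TopologicalSpace Y), K Y tY →
    ∀ f : X → Y, @Continuous X Y tX tY f →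
      ∃! y : Y, @closure Y tY (f '' A) = @closure Y tY {y}

/-- `𝐊(X)`: the collection of closed `𝐊`-sets of `X`. -/
def KSets (K : (Y : Type u) → TopologicalSpace Y → Prop)
    (X : Type u) [TopologicalSpace X] : Set (Set X) :=
  {A : Set X | IsClosed A ∧ IsKSet K X A}

/-- The lower Vietoris topology on a family `G` of subsets of `X`, generated by the
sets `◊U = {A ∈ G | A ∩ U ≠ ∅}` for `U` open. -/
def lowerVietoris {X : Type*} [TopologicalSpace X] (G : Set (Set X)) :
    TopologicalSpace ↥G :=
  TopologicalSpace.generateFrom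
    {S : Set ↥G | ∃ U : Set X, IsOpen U ∧ S = {A : ↥G | ((A : Set X) ∩ U).Nonempty}}

/-- A class `K` of spaces is adequate if `P_H(𝐊(X))` is a `𝐊`-space for every T0 space `X`. -/
def Adequate (K : (Y : Type u) → TopologicalSpace Y → Prop) : Prop :=
  ∀ (X : Type u) (tX : TopologicalSpace X), @T0Space X tX →
    K ↥(@KSets K X tX) (@lowerVietoris X tX (@KSets K X tX))

/-- `⟨Z, η⟩` is a `𝐊`-reflection of `X`. -/
def IsKReflection (K : (Y : Type u) → TopologicalSpace Y → Prop)
    (X : Type u) (tX : TopologicalSpace X)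
    (Z : Type u) (tZ : TopologicalSpace Z) (η : X → Z) : Prop :=
  K Z tZ ∧ @Continuous X Z tX tZ η ∧
  ∀ (Y : Type u) (tY : TopologicalSpace Y), K Y tY →
    ∀ f : X → Y, @Continuous X Y tX tY f →
      ∃! g : Z → Y, @Continuous Z Y tZ tY g ∧ g ∘ η = f

/-- The carrier of the Johnstone poset `𝕁 = ℕ × (ℕ ∪ {ω})`. -/
structure Johnstone where
  fst : ℕ
  snd : WithTop ℕ

/-- The Johnstone order: `(j, k) ≤ (m, n)` iff `j = m` and `k ≤ n`, or `n = ω` and `k ≤ m`. -/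
instance : PartialOrder Johnstone where
  le p q := (p.fst = q.fst ∧ p.snd ≤ q.snd) ∨ (q.snd = ⊤ ∧ p.snd ≤ (q.fst : WithTop ℕ))
  le_refl p := Or.inl ⟨rfl, le_rfl⟩
  le_trans p q r hpq hqr := by
    rcases hpq with ⟨h1, h2⟩ | ⟨h1, h2⟩ <;> rcases hqr with ⟨h3, h4⟩ | ⟨h3, h4⟩
    · exact Or.inl ⟨h1.trans h3, h2.trans h4⟩
    · exact Or.inr ⟨h3, h2.trans h4⟩
    · have hr : r.snd = ⊤ := top_le_iff.mp (h1 ▸ h4)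
      exact Or.inr ⟨hr, h3 ▸ h2⟩
    · rw [h1] at h4
      exact absurd h4 (by simp)
  le_antisymm p q hpq hqp := by
    obtain ⟨pf, ps⟩ := p
    obtain ⟨qf, qs⟩ := q
    rcases hpq with ⟨h1, h2⟩ | ⟨h1, h2⟩ <;> rcases hqp with ⟨h3, h4⟩ | ⟨h3, h4⟩
    · dsimp at *
      cases h1
      cases le_antisymm h2 h4
      rfl
    · dsimp at *
      rw [h3] at h2
      rw [top_le_iff.mp h2] at h4
      exact absurd h4 (by simp)
    · dsimp at *
      rw [h1] at h4
      rw [top_le_iff.mp h4] at h2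
      exact absurd h2 (by simp)
    · dsimp at *
      rw [h3] at h2
      exact absurd h2 (by simp)

/-- The class of d-spaces. -/
def dClass : (Y : Type u) → TopologicalSpace Y → Prop := fun Y tY => @DSpace Y tY

/-- The class of well-filtered spaces. -/
def wfClass : (Y : Type u) → TopologicalSpace Y → Prop := fun Y tY => @WellFiltered Y tY

/-- The class of sober spaces. -/
def soberClass : (Y : Type u) → TopologicalSpace Y → Prop := fun Y tY => @Sober Y tY

/-! Sobriety and being a d-space both assert that certain closed sets have a generic point, and
well-filteredness yields, through a minimal closed set in the style of Rudin's lemma, a point `x` in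
the intersection of a filtered family which lies in the closure of `(⋃ i, K i) ∩ closure {x}`. In
each case, for data living in a subspace `A`, the point `x` found in the ambient space lies in the
closure of `A ∩ closure {x}`, so it belongs to `A` as soon as `A` is closed in the Skula topology.
If `x` is in the closure of `E ∩ closure {x}`, where `E` is the equalizer of two continuous maps,
then the two images of `x` specialize to each other, so `E` is Skula closed when
the target is T0. -/

section SkulaClosed

variable {X Y : Type*} [TopologicalSpace X] [TopologicalSpace Y] {A : Set X}

/-- Closedness in the Skula topology (also called the strong or b-topology), which is generated by
the open and the closed sets. It is encoded through its closure operator: since the sets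
`U ∩ closure {x}`, with `U` an open neighbourhood of `x`, form a basis of Skula neighbourhoods of
`x`, the point `x` is in the Skula closure of `A` iff `x ∈ closure (A ∩ closure {x})`. -/
def IsSkulaClosed (A : Set X) : Prop :=
  ∀ x, x ∈ closure (A ∩ closure {x}) → x ∈ A

theorem specializes_of_mem_closure_setOf_eq {f g : X → Y} (hf : Continuous f) (hg : Continuous g)
    {x : X} (hx : x ∈ closure ({y | f y = g y} ∩ closure {x})) : f x ⤳ g x := by
  have hmaps : MapsTo g ({y | f y = g y} ∩ closure {x}) (closure {f x}) := by
    rintro y ⟨hy : f y = g y, hxy⟩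
    rw [← hy]
    exact ((specializes_iff_mem_closure.2 hxy).map hf).mem_closure
  exact specializes_iff_mem_closure.2 (by
    simpa only [closure_closure] using map_mem_closure hg hx hmaps)

theorem isSkulaClosed_setOf_eq [T0Space Y] {f g : X → Y} (hf : Continuous f) (hg : Continuous g) :
    IsSkulaClosed {x | f x = g x} := by
  intro x hx
  have hfg : f x ⤳ g x := specializes_of_mem_closure_setOf_eq hf hg hx
  have hgf : g x ⤳ f x :=
    specializes_of_mem_closure_setOf_eq hg hf (by simpa only [eq_comm] using hx)
  exact (hfg.antisymm hgf).eq

theorem IsSkulaClosed.exists_isGenericPoint_closure (hA : IsSkulaClosed A) {S : Set A} {x : X}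
    (hx : IsGenericPoint x (closure (Subtype.val '' S))) :
    ∃ a : A, IsGenericPoint a (closure S) := by
  have hsub : Subtype.val '' S ⊆ A ∩ closure {x} := by
    rintro _ ⟨a, ha, rfl⟩
    exact ⟨a.2, hx.def ▸ subset_closure (mem_image_of_mem _ ha)⟩
  refine ⟨⟨x, hA x (closure_mono hsub hx.mem)⟩, isGenericPoint_iff_specializes.2 fun a => ?_⟩
  rw [subtype_specializes_iff, hx.specializes_iff_mem, closure_subtype]

end SkulaClosed

section Sober

variable {X : Type*} [TopologicalSpace X] {A : Set X}

theorem irredClosed_iff : IrredClosed A ↔ IsIrreducible A ∧ IsClosed A := by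
  rw [IrredClosed, IsIrreducible, isPreirreducible_iff_isClosed_union_isClosed]
  tauto

theorem sober_iff : Sober X ↔ T0Space X ∧ QuasiSober X := by
  refine ⟨fun h => ⟨⟨fun x y hxy => ?_⟩, ⟨fun hS hSc => ?_⟩⟩, fun ⟨_, _⟩ S hS => ?_⟩
  · have hirr : IrredClosed (closure {y}) :=
      irredClosed_iff.2 ⟨isIrreducible_singleton.closure, isClosed_closure⟩
    exact (h _ hirr).unique (inseparable_iff_closure_eq.1 hxy).symm rfl
  · obtain ⟨x, hx, -⟩ := h _ (irredClosed_iff.2 ⟨hS, hSc⟩)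
    exact ⟨x, hx.symm⟩
  · obtain ⟨hirr, hclosed⟩ := irredClosed_iff.1 hS
    obtain ⟨x, hx⟩ := QuasiSober.sober hirr hclosed
    exact ⟨x, hx.def.symm, fun y hy => IsGenericPoint.eq hy.symm hx⟩

theorem IsSkulaClosed.sober (hA : IsSkulaClosed A) (hX : Sober X) : Sober A := by
  obtain ⟨_, _⟩ := sober_iff.1 hX
  refine sober_iff.2 ⟨inferInstance, ⟨fun {S} hS hSc => ?_⟩⟩
  have hirr : IsIrreducible (Subtype.val '' S) := hS.image _ continuous_subtype_val.continuousOn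
  simpa only [hSc.closure_eq] using
    hA.exists_isGenericPoint_closure hirr.isGenericPoint_genericPoint_closure

end Sober

section DSpace

variable {X : Type*} [TopologicalSpace X] {A : Set X}

theorem specLE_iff_specializes {x y : X} : specLE x y ↔ y ⤳ x :=
  specializes_iff_mem_closure.symm

theorem specUB_iff_closure_subset {D : Set X} {a : X} : specUB D a ↔ closure D ⊆ closure {a} :=
  isClosed_closure.closure_subset_iff.symm

theorem specLUB_of_isGenericPoint_closure {D : Set X} {a : X} (ha : IsGenericPoint a (closure D)) :
    specLUB D a :=
  ⟨specUB_iff_closure_subset.2 ha.def.ge, fun _ hb => specUB_iff_closure_subset.1 hb ha.mem⟩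

theorem dSpace_iff : DSpace X ↔ T0Space X ∧
    ∀ D : Set X, D.Nonempty → DirectedOn specLE D → ∃ a, IsGenericPoint a (closure D) := by
  refine and_congr_right fun _ => ⟨fun ⟨hlub, hscott⟩ D hne hdir => ?_, fun h =>
    ⟨fun D hne hdir => ?_, fun U hU => ⟨fun x y hxy hx => ?_, fun D hne hdir b hb hbU => ?_⟩⟩⟩
  · obtain ⟨a, ha⟩ := hlub D hne hdir
    have haD : a ∈ closure D := mem_closure_iff.2 fun U hU haU =>
      inter_comm D U ▸ (hscott U hU).2 D hne hdir a ha haU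
    exact ⟨a, (closure_minimal (singleton_subset_iff.2 haD) isClosed_closure).antisymm
      (specUB_iff_closure_subset.1 ha.1)⟩
  · obtain ⟨a, ha⟩ := h D hne hdir
    exact ⟨a, specLUB_of_isGenericPoint_closure ha⟩
  · exact (specLE_iff_specializes.1 hxy).mem_open hU hx
  · obtain ⟨a, ha⟩ := h D hne hdir
    have hba : specLE b a := hb.2 a (specLUB_of_isGenericPoint_closure ha).1
    have haU : a ∈ U := (specLE_iff_specializes.1 hba).mem_open hU hbU
    exact (closure_inter_open_nonempty_iff hU).1 ⟨a, ha.mem, haU⟩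

theorem IsSkulaClosed.dSpace (hA : IsSkulaClosed A) (hX : DSpace X) : DSpace A := by
  obtain ⟨_, hgen⟩ := dSpace_iff.1 hX
  refine dSpace_iff.2 ⟨inferInstance, fun D hne hdir => ?_⟩
  have hdir' : DirectedOn specLE (Subtype.val '' D) := hdir.mono_comp fun _ _ hab =>
    specLE_iff_specializes.2 ((specLE_iff_specializes.1 hab).map continuous_subtype_val)
  obtain ⟨x, hx⟩ := hgen _ (hne.image _) hdir'
  exact hA.exists_isGenericPoint_closure hx

end DSpace

section WellFiltered

variable {X ι : Type*} [TopologicalSpace X] {A C : Set X} {K : ι → Set X}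

theorem saturated_iff_nhdsKer_subset : Saturated A ↔ nhdsKer A ⊆ A := by
  refine ⟨?_, fun h => ⟨{U | IsOpen U ∧ A ⊆ U}, fun U hU => hU.1, ?_⟩⟩
  · rintro ⟨𝒰, h𝒰, rfl⟩
    exact subset_sInter fun U hU => nhdsKer_minimal (sInter_subset_of_mem hU) (h𝒰 U hU)
  · rw [← nhdsKer_def]
    exact subset_nhdsKer.antisymm h

theorem exists_minimal_isClosed_forall_inter_nonempty (hK : ∀ i, IsCompact (K i))
    (hC : IsClosed C) (hCK : ∀ i, (K i ∩ C).Nonempty) :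
    ∃ M ⊆ C, Minimal (fun F => IsClosed F ∧ ∀ i, (K i ∩ F).Nonempty) M := by
  refine zorn_superset_nonempty {F | IsClosed F ∧ ∀ i, (K i ∩ F).Nonempty}
    (fun c hc hchain hcne => ?_) C ⟨hC, hCK⟩
  refine ⟨⋂₀ c, ⟨isClosed_sInter fun F hF => (hc hF).1, fun i => ?_⟩,
    fun F hF => sInter_subset_of_mem hF⟩
  have : Nonempty c := hcne.to_subtype
  rw [sInter_eq_iInter]
  by_contra hempty
  have hdir : DirectedOn (· ≥ ·) c := IsChain.directedOn hchain.symm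
  obtain ⟨F, hF⟩ := (hK i).elim_directed_family_closed (fun F : c => (F : Set X))
    (fun F => (hc F.2).1) (not_nonempty_iff_eq_empty.1 hempty) hdir.directed_val
  exact ((hc F.2).2 i).ne_empty hF

theorem WellFiltered.exists_subset_of_iInter_nhdsKer_subset [Nonempty ι] (hX : WellFiltered X)
    (hK : ∀ i, IsCompact (K i)) (hne : ∀ i, (K i).Nonempty) (hdir : Directed (· ⊇ ·) K)
    {U : Set X} (hU : IsOpen U) (hKU : ⋂ i, nhdsKer (K i) ⊆ U) : ∃ i, K i ⊆ U := by
  have hdir' : Directed (· ⊇ ·) fun i => nhdsKer (K i) :=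
    hdir.mono_comp (g := nhdsKer) (· ≥ ·) fun _ _ h => nhdsKer_subset_nhdsKer h
  obtain ⟨_, ⟨i, rfl⟩, hi⟩ := hX.2 (range fun i => nhdsKer (K i)) (range_nonempty _)
    (forall_mem_range.2 fun i => ⟨(hne i).mono subset_nhdsKer, (hK i).nhdsKer,
      saturated_iff_nhdsKer_subset.2 (nhdsKer_nhdsKer _).subset⟩)
    hdir'.directedOn_range U hU hKU
  exact ⟨i, subset_nhdsKer.trans hi⟩

theorem WellFiltered.exists_mem_forall_mem_nhdsKer_inter [Nonempty ι] (hX : WellFiltered X)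
    (hK : ∀ i, IsCompact (K i)) (hdir : Directed (· ⊇ ·) K) (hC : IsClosed C)
    (hCK : ∀ i, (K i ∩ C).Nonempty) : ∃ x ∈ C, ∀ i, x ∈ nhdsKer (K i ∩ C) := by
  by_contra! hno
  have hdirC : Directed (· ⊇ ·) fun i => K i ∩ C :=
    hdir.mono_comp (g := (· ∩ C)) (· ≥ ·) fun _ _ h => inter_subset_inter_left C h
  obtain ⟨i, hi⟩ := hX.exists_subset_of_iInter_nhdsKer_subset
    (fun i => (hK i).inter_right hC) hCK hdirC hC.isOpen_compl
    fun x hx hxC => (hno x hxC).elim fun i hi => hi (mem_iInter.1 hx i)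
  obtain ⟨x, hx⟩ := hCK i
  exact hi hx hx.2

theorem WellFiltered.exists_mem_forall_mem_nhdsKer_and_mem_closure [Nonempty ι]
    (hX : WellFiltered X) (hK : ∀ i, IsCompact (K i)) (hdir : Directed (· ⊇ ·) K)
    (hC : IsClosed C) (hCK : ∀ i, (K i ∩ C).Nonempty) :
    ∃ x ∈ C, (∀ i, x ∈ nhdsKer (K i)) ∧ x ∈ closure ((⋃ i, K i) ∩ closure {x}) := by
  obtain ⟨M, hMC, hM⟩ := exists_minimal_isClosed_forall_inter_nonempty hK hC hCK
  obtain ⟨x, hxM, hx⟩ := hX.exists_mem_forall_mem_nhdsKer_inter hK hdir hM.prop.1 hM.prop.2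
  refine ⟨x, hMC hxM, fun i => nhdsKer_subset_nhdsKer inter_subset_left (hx i),
    mem_closure_iff.2 fun W hW hxW => ?_⟩
  have hMW : ∃ i, K i ∩ M ⊆ W := by
    by_contra! hno
    have hlarge : ∀ i, (K i ∩ (M ∩ Wᶜ)).Nonempty := fun i =>
      (not_subset.1 (hno i)).imp fun k ⟨⟨hk, hkM⟩, hkW⟩ => ⟨hk, hkM, hkW⟩
    exact (hM.le_of_le ⟨hM.prop.1.inter hW.isClosed_compl, hlarge⟩ inter_subset_left hxM).2 hxW
  obtain ⟨i, hi⟩ := hMW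
  obtain ⟨k, hk, hxk⟩ := mem_nhdsKer_iff_specializes.1 (hx i)
  exact ⟨k, hi hk, mem_iUnion_of_mem i hk.1, hxk.mem_closure⟩

theorem IsSkulaClosed.wellFiltered (hA : IsSkulaClosed A) (hX : WellFiltered X) :
    WellFiltered A := by
  have : T0Space X := hX.1
  refine ⟨inferInstance, fun 𝒦 hne h𝒦 hdir U hU hsub => ?_⟩
  obtain ⟨V, hV, rfl⟩ := isOpen_induced_iff.1 hU
  have : Nonempty 𝒦 := hne.to_subtype
  by_contra! hno
  have hdir' : Directed (· ⊇ ·) fun K : 𝒦 => Subtype.val '' (K : Set A) :=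
    hdir.directed_val.mono_comp (g := image Subtype.val) (· ≥ ·) fun _ _ h => image_mono h
  have hVK (K : 𝒦) : (Subtype.val '' (K : Set A) ∩ Vᶜ).Nonempty :=
    (not_subset.1 (hno K K.2)).elim fun a ⟨ha, haV⟩ => ⟨a, mem_image_of_mem _ ha, haV⟩
  obtain ⟨x, hxV, hxK, hx⟩ := hX.exists_mem_forall_mem_nhdsKer_and_mem_closure
    (fun K : 𝒦 => (h𝒦 K K.2).2.1.image continuous_subtype_val) hdir' hV.isClosed_compl hVK
  have hxA : x ∈ A := hA x <| closure_mono
    (inter_subset_inter_left _ (iUnion_subset fun K : 𝒦 => Subtype.coe_image_subset A K)) hx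
  refine hxV (@hsub ⟨x, hxA⟩ fun K hK => saturated_iff_nhdsKer_subset.1 (h𝒦 K hK).2.2 ?_)
  obtain ⟨_, ⟨a, ha, rfl⟩, hxa⟩ := mem_nhdsKer_iff_specializes.1 (hxK ⟨K, hK⟩)
  exact mem_nhdsKer_iff_specializes.2 ⟨a, ha, (subtype_specializes_iff _ _).2 hxa⟩

end WellFiltered

theorem stmt5_general {X : Type*} [TopologicalSpace X] {A : Set X} (hA : IsSkulaClosed A) :
    (Sober X → Sober A) ∧ (WellFiltered X → WellFiltered A) ∧ (DSpace X → DSpace A) :=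
  ⟨hA.sober, hA.wellFiltered, hA.dSpace⟩

/-- Equalizers of continuous maps into a T0 space inherit sobriety,
well-filteredness and the d-space property. -/
theorem stmt5 (X : Type*) [TopologicalSpace X] (Y : Type*) [TopologicalSpace Y] [T0Space Y]
    (f g : X → Y) (hf : Continuous f) (hg : Continuous g) :
    (Sober X → Sober {x : X // f x = g x}) ∧
    (WellFiltered X → WellFiltered {x : X // f x = g x}) ∧
    (DSpace X → DSpace {x : X // f x = g x}) := stmt5_general (isSkulaClosed_setOf_eq hf hg)
end

section
/- Let 𝐊 be a class of T0 topological spaces such that: every sober space is a 𝐊-space; any space homeomorphic to a 𝐊-space is a 𝐊-space; every 𝐊-space is a d-space; and 𝐊 is adequate. Let X be a T0 space and consider: (1) Σ 𝐊(X), the set 𝐊(X) ordered by inclusion with the Scott topology, is a 𝐊-space; (2) the map η : X → Σ 𝐊(X), η(x) = closure({x}), is continuous; (3) the 𝐊-reflection of X exists and is a Scott space, i.e. there exist a poset Q and a continuous map ξ : X → Σ Q such that Σ Q is a 𝐊-space and ⟨Σ Q, ξ⟩ is a 𝐊-reflection of X. Then (1) and (2) together imply (3), in which case ⟨Σ 𝐊(X),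 η⟩ itself is a 𝐊-reflection of X; and (3) implies (1). -/
universe u v

open Set

/-!
The space `P_H(𝐊(X))` with `η x = closure {x}` is a `𝐊`-reflection of `X`: a continuous map `f` to
a `𝐊`-space extends by sending a closed `𝐊`-set `A` to the generic point of `closure (f '' A)`, and
the extension is unique because `A` is itself the generic point of `closure (η '' A)`. Since
`P_H(𝐊(X))` is a d-space with inclusion as its specialization order, the Scott topology on `𝐊(X)`
refines the lower Vietoris topology, and both implications come down to showing that the two
topologies coincide. Under (1) and (2) the universal property makes the identity continuous from
the lower Vietoris to the Scott topology. Under (3), `P_H(𝐊(X))` is homeomorphic to a Scott space,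
and a space homeomorphic to a Scott space carries the Scott topology of its own specialization
order.
-/

open Topology

section Scott

variable {P Q : Type*} [Preorder P] [Preorder Q]

theorem IsScottOpen.preimage_orderIso (e : P ≃o Q) {U : Set Q} (hU : IsScottOpen U) :
    IsScottOpen (e ⁻¹' U) := by
  refine ⟨hU.1.preimage e.monotone, fun D hne hD a ha haU => ?_⟩
  exact image_inter_nonempty_iff.mp <| hU.2 (e '' D) (hne.image e)
    (directedOn_image.mpr (hD.mono @e.monotone)) (e a) (e.isLUB_image'.mpr ha) haU

theorem isScottOpen_compl_Iic (a : P) : IsScottOpen (Iic a)ᶜ :=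
  ⟨(isLowerSet_Iic a).compl,
    fun _ hne hD _ hs => dirSupInacc_compl.mpr (dirSupClosed_Iic a) hne hD hs⟩

theorem specializes_scottTop_iff {a b : P} : @Specializes P (scottTop P) a b ↔ b ≤ a := by
  let := scottTop P
  constructor
  · intro h
    have hclosed : IsClosed (Iic a) := ⟨isScottOpen_compl_Iic a⟩
    exact h.mem_closed hclosed self_mem_Iic
  · exact fun h => specializes_iff_forall_open.mpr fun U hU hb => hU.1 h hb

theorem eq_scottTop_of_homeomorph {t : TopologicalSpace P} (ht : ∀ a b : P, a ⤳ b ↔ b ≤ a)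
    (e : @Homeomorph P Q t (scottTop Q)) : t = scottTop P := by
  let := scottTop Q
  have map_le_iff (a b : P) : e a ≤ e b ↔ a ≤ b := by
    rw [← specializes_scottTop_iff, e.isInducing.specializes_iff, ht]
  let o : P ≃o Q := ⟨e.toEquiv, map_le_iff _ _⟩
  ext U
  constructor
  · intro hU
    have hV : IsScottOpen (e.symm ⁻¹' U) := hU.preimage e.symm.continuous
    have hoU : o ⁻¹' (e.symm ⁻¹' U) = U := e.toEquiv.preimage_symm_preimage U
    exact hoU ▸ hV.preimage_orderIso o
  · intro hU
    have hV : IsOpen (e.symm ⁻¹' U) := IsScottOpen.preimage_orderIso o.symm hU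
    exact e.symm.isOpen_preimage.mp hV

theorem scottTop_le_of_scottOpenSpec {t : TopologicalSpace P} (ht : ∀ a b : P, a ⤳ b ↔ b ≤ a)
    (hopen : ∀ U : Set P, IsOpen U → ScottOpenSpec U) : scottTop P ≤ t := by
  have specLE_eq_le : (specLE : P → P → Prop) = (· ≤ ·) := by
    ext a b
    exact specializes_iff_mem_closure.symm.trans (ht b a)
  intro U hU
  obtain ⟨hup, hsup⟩ := hopen U hU
  simp only [specLUB, specUB, specLE_eq_le] at hup hsup
  exact ⟨fun a b => hup a b, hsup⟩

end Scott

section GenericPoint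

variable {X Y : Type*} [TopologicalSpace X] [TopologicalSpace Y]

theorem eq_of_isGenericPoint_closure_of_eqOn [T0Space Y] {S : Set X} {x : X} {f g : X → Y}
    (hx : IsGenericPoint x (closure S)) (hf : Continuous f) (hg : Continuous g)
    (hfg : EqOn f g S) : f x = g x := by
  have hfx : IsGenericPoint (f x) (closure (g '' S)) := by
    simpa only [closure_image_closure hf, hfg.image_eq] using hx.image hf
  have hgx : IsGenericPoint (g x) (closure (g '' S)) := by
    simpa only [closure_image_closure hg] using hx.image hg
  exact hfx.eq hgx

end GenericPoint

section LowerVietoris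

attribute [local instance] lowerVietoris

variable {X Y : Type*} [TopologicalSpace X] {G : Set (Set X)}

theorem isOpen_lowerVietoris_inter_nonempty {U : Set X} (hU : IsOpen U) :
    IsOpen {A : G | ((A : Set X) ∩ U).Nonempty} :=
  TopologicalSpace.isOpen_generateFrom_of_mem ⟨U, hU, rfl⟩

theorem continuous_lowerVietoris_iff [TopologicalSpace Y] {f : Y → G} :
    Continuous f ↔ ∀ U : Set X, IsOpen U → IsOpen {y | ((f y : Set X) ∩ U).Nonempty} := by
  refine continuous_generateFrom_iff.trans ⟨fun h U hU => h _ ⟨U, hU, rfl⟩, ?_⟩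
  rintro h _ ⟨U, hU, rfl⟩
  exact h U hU

theorem specializes_lowerVietoris_iff (hG : ∀ A ∈ G, IsClosed A) {A B : G} : A ⤳ B ↔ B ≤ A := by
  constructor
  · intro h b hb
    by_contra hbA
    obtain ⟨a, haA, haA'⟩ := h.mem_open
      (isOpen_lowerVietoris_inter_nonempty (hG A A.2).isOpen_compl) ⟨b, hb, hbA⟩
    exact haA' haA
  · intro h
    refine le_of_le_of_eq (le_iInf₂ ?_) TopologicalSpace.nhds_generateFrom.symm
    rintro _ ⟨hB, U, hU, rfl⟩
    exact Filter.le_principal_iff.mpr <|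
      (isOpen_lowerVietoris_inter_nonempty hU).mem_nhds (hB.mono (inter_subset_inter_left U h))

theorem continuous_of_coe_eq_closure_singleton {η : X → G}
    (hη : ∀ x, (η x : Set X) = closure {x}) : Continuous η := by
  refine continuous_lowerVietoris_iff.mpr fun U hU => ?_
  simpa only [hη, closure_inter_open_nonempty_iff hU, singleton_inter_nonempty,
    ofPred_mem_eq] using hU

theorem continuous_of_isGenericPoint_closure_image [TopologicalSpace Y] {f : X → Y}
    (hf : Continuous f) {g : G → Y}
    (hg : ∀ A : G, IsGenericPoint (g A) (closure (f '' A))) : Continuous g := by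
  refine continuous_def.mpr fun V hV => ?_
  have preimage_eq : g ⁻¹' V = {A : G | ((A : Set X) ∩ f ⁻¹' V).Nonempty} := by
    ext A
    rw [mem_preimage, (hg A).mem_open_set_iff hV, closure_inter_open_nonempty_iff hV,
      image_inter_nonempty_iff, mem_ofPred_eq]
  exact preimage_eq ▸ isOpen_lowerVietoris_inter_nonempty (hV.preimage hf)

end LowerVietoris

section KSets

variable {K : (Y : Type u) → TopologicalSpace Y → Prop} {X : Type u} [tX : TopologicalSpace X]

theorem IsKSet.exists_isGenericPoint {A : Set X} (hA : IsKSet K X A) {Y : Type u}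
    {tY : TopologicalSpace Y} (hY : K Y tY) {f : X → Y} (hf : Continuous f) :
    ∃ y, IsGenericPoint y (closure (f '' A)) :=
  (hA Y tY hY f hf).exists.imp fun _ hy => hy.symm

theorem closure_singleton_mem_KSets
    (hT0 : ∀ (Y : Type u) (tY : TopologicalSpace Y), K Y tY → @T0Space Y tY) (x : X) :
    closure {x} ∈ KSets K X := by
  refine ⟨isClosed_closure, fun Y tY hY f hf => ?_⟩
  have := hT0 Y tY hY
  have hfx := (isGenericPoint_closure (x := x)).image hf
  exact ⟨f x, hfx.symm, fun y hy => IsGenericPoint.eq hy.symm hfx⟩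

theorem specializes_KSets_iff {A B : KSets K X} :
    @Specializes _ (lowerVietoris (KSets K X)) A B ↔ B ≤ A :=
  specializes_lowerVietoris_iff fun _ hA => hA.1

attribute [local instance] lowerVietoris in
theorem isGenericPoint_closure_image_KSets (hP : K (KSets K X) (lowerVietoris (KSets K X)))
    {η : X → KSets K X} (hη : ∀ x, (η x : Set X) = closure {x}) (A : KSets K X) :
    IsGenericPoint A (closure (η '' A)) := by
  obtain ⟨B, hB⟩ := A.2.2.exists_isGenericPoint hP (continuous_of_coe_eq_closure_singleton hη)
  have hAB : A ≤ B := fun a ha => by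
    have hle : η a ≤ B :=
      specializes_KSets_iff.mp (hB.specializes (subset_closure (mem_image_of_mem η ha)))
    exact hle (hη a ▸ subset_closure rfl)
  have hBA : B ≤ A := by
    have image_subset : η '' A ⊆ closure {A} := by
      rintro _ ⟨a, ha, rfl⟩
      rw [← specializes_iff_mem_closure, specializes_KSets_iff, ← Subtype.coe_le_coe, hη]
      exact closure_minimal (singleton_subset_iff.mpr ha) A.2.1
    exact specializes_KSets_iff.mp <| specializes_iff_mem_closure.mpr <|
      closure_minimal image_subset isClosed_closure hB.mem
  exact hAB.antisymm hBA ▸ hB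

end KSets

section Reflection

variable {K : (Y : Type u) → TopologicalSpace Y → Prop} {X : Type u} [tX : TopologicalSpace X]

theorem isKReflection_lowerVietoris
    (hT0 : ∀ (Y : Type u) (tY : TopologicalSpace Y), K Y tY → @T0Space Y tY)
    (hP : K (KSets K X) (lowerVietoris (KSets K X)))
    {η : X → KSets K X} (hη : ∀ x, (η x : Set X) = closure {x}) :
    IsKReflection K X tX (KSets K X) (lowerVietoris (KSets K X)) η := by
  let := lowerVietoris (KSets K X)
  refine ⟨hP, continuous_of_coe_eq_closure_singleton hη, fun Y tY hY f hf => ?_⟩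
  have := hT0 Y tY hY
  choose g hg using fun A : KSets K X => A.2.2.exists_isGenericPoint hY hf
  have hgc : Continuous g := continuous_of_isGenericPoint_closure_image hf hg
  have hgη : g ∘ η = f := funext fun x =>
    (hg (η x)).eq (hη x ▸ isGenericPoint_closure.image hf)
  refine ⟨g, ⟨hgc, hgη⟩, fun g' ⟨hg'c, hg'η⟩ => funext fun A => ?_⟩
  refine eq_of_isGenericPoint_closure_of_eqOn (isGenericPoint_closure_image_KSets hP hη A)
    hg'c hgc ?_
  rintro _ ⟨a, -, rfl⟩
  exact congrFun (hg'η.trans hgη.symm) a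

variable {Z W : Type u} {tZ : TopologicalSpace Z} {tW : TopologicalSpace W} {η : X → Z} {ξ : X → W}

theorem IsKReflection.eq_id (hZ : IsKReflection K X tX Z tZ η) {g : Z → Z} (hg : Continuous g)
    (hgη : g ∘ η = η) : g = id :=
  (hZ.2.2 Z tZ hZ.1 η hZ.2.1).unique ⟨hg, hgη⟩ ⟨continuous_id, rfl⟩

theorem IsKReflection.nonempty_homeomorph (hZ : IsKReflection K X tX Z tZ η)
    (hW : IsKReflection K X tX W tW ξ) : Nonempty (Z ≃ₜ W) := by
  obtain ⟨g, ⟨hg, hgη⟩, -⟩ := hZ.2.2 W tW hW.1 ξ hW.2.1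
  obtain ⟨h, ⟨hh, hhξ⟩, -⟩ := hW.2.2 Z tZ hZ.1 η hZ.2.1
  have hhg : h ∘ g = id := hZ.eq_id (hh.comp hg) (by rw [Function.comp_assoc, hgη, hhξ])
  have hgh : g ∘ h = id := hW.eq_id (hg.comp hh) (by rw [Function.comp_assoc, hhξ, hgη])
  exact ⟨⟨g, h, congrFun hhg, congrFun hgh⟩, hg, hh⟩

theorem IsKReflection.topology_eq_of_le (hZ : IsKReflection K X tX Z tZ η)
    {t : TopologicalSpace Z} (ht : K Z t) (hle : t ≤ tZ) (hη : Continuous[tX, t] η) : t = tZ := by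
  obtain ⟨g, ⟨hg, hgη⟩, -⟩ := hZ.2.2 Z t ht η hη
  have hg_id : g = id := hZ.eq_id (continuous_le_rng hle hg) hgη
  exact hle.antisymm (continuous_id_iff_le.mp (hg_id ▸ hg))

end Reflection

theorem stmt8_general
    (K : (Y : Type u) → TopologicalSpace Y → Prop)
    (hT0 : ∀ (Y : Type u) (tY : TopologicalSpace Y), K Y tY → @T0Space Y tY)
    (X : Type u) [tX : TopologicalSpace X]
    (hP : K ↥(KSets K X) (lowerVietoris (KSets K X)))
    (hle : scottTop ↥(KSets K X) ≤ lowerVietoris (KSets K X)) :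
    (∀ x : X, closure ({x} : Set X) ∈ KSets K X) ∧
    ∀ η : X → ↥(KSets K X), (∀ x : X, (η x : Set X) = closure ({x} : Set X)) →
      ((K ↥(KSets K X) (scottTop ↥(KSets K X)) ∧
          @Continuous X ↥(KSets K X) tX (scottTop ↥(KSets K X)) η) →
        (IsKReflection K X tX ↥(KSets K X) (scottTop ↥(KSets K X)) η ∧
          ∃ (Q : Type u) (pQ : PartialOrder Q) (ξ : X → Q),
            IsKReflection K X tX Q (@scottTop Q pQ.toPreorder) ξ)) ∧
      ((∃ (Q : Type u) (pQ : PartialOrder Q) (ξ : X → Q),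
            IsKReflection K X tX Q (@scottTop Q pQ.toPreorder) ξ) →
        K ↥(KSets K X) (scottTop ↥(KSets K X))) := by
  refine ⟨closure_singleton_mem_KSets hT0, fun η hη => ?_⟩
  have hV := isKReflection_lowerVietoris hT0 hP hη
  constructor
  · rintro ⟨hScott, hηc⟩
    have htop := hV.topology_eq_of_le hScott hle hηc
    have hReflects : IsKReflection K X tX ↥(KSets K X) (scottTop ↥(KSets K X)) η := htop ▸ hV
    exact ⟨hReflects, _, inferInstance, η, hReflects⟩
  · rintro ⟨Q, _, ξ, hQ⟩
    obtain ⟨e⟩ := hV.nonempty_homeomorph hQ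
    exact eq_scottTop_of_homeomorph (fun _ _ => specializes_KSets_iff) e ▸ hP

/-- Conditions for the `𝐊`-reflection of a T0 space `X` to be a Scott space:
if `Σ 𝐊(X)` is a `𝐊`-space (1) and `η : X → Σ 𝐊(X)`, `η x = closure {x}`, is continuous (2),
then `⟨Σ 𝐊(X), η⟩` is a `𝐊`-reflection of `X` (so the `𝐊`-reflection of `X` exists and is a
Scott space (3)); conversely (3) implies (1). -/
theorem stmt8
    (K : (Y : Type u) → TopologicalSpace Y → Prop)
    (hT0 : ∀ (Y : Type u) (tY : TopologicalSpace Y), K Y tY → @T0Space Y tY)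
    (hSober : ∀ (Y : Type u) (tY : TopologicalSpace Y), @Sober Y tY → K Y tY)
    (hHomeo : ∀ (Y : Type u) (tY : TopologicalSpace Y) (Z : Type u) (tZ : TopologicalSpace Z),
      K Y tY → Nonempty (@Homeomorph Y Z tY tZ) → K Z tZ)
    (hD : ∀ (Y : Type u) (tY : TopologicalSpace Y), K Y tY → @DSpace Y tY)
    (hAdeq : Adequate K)
    (X : Type u) [tX : TopologicalSpace X] [T0Space X] :
    (∀ x : X, closure ({x} : Set X) ∈ KSets K X) ∧
    ∀ η : X → ↥(KSets K X), (∀ x : X, (η x : Set X) = closure ({x} : Set X)) →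
      ((K ↥(KSets K X) (scottTop ↥(KSets K X)) ∧
          @Continuous X ↥(KSets K X) tX (scottTop ↥(KSets K X)) η) →
        (IsKReflection K X tX ↥(KSets K X) (scottTop ↥(KSets K X)) η ∧
          ∃ (Q : Type u) (pQ : PartialOrder Q) (ξ : X → Q),
            IsKReflection K X tX Q (@scottTop Q pQ.toPreorder) ξ)) ∧
      ((∃ (Q : Type u) (pQ : PartialOrder Q) (ξ : X → Q),
            IsKReflection K X tX Q (@scottTop Q pQ.toPreorder) ξ) →
        K ↥(KSets K X) (scottTop ↥(KSets K X))) := by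
  have hP := hAdeq X tX inferInstance
  exact stmt8_general K hT0 X hP <|
    scottTop_le_of_scottOpenSpec (fun _ _ => specializes_KSets_iff) (hD _ _ hP).2.2
end
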